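/- For every integer k ≥ 2, the maximum number of separated pairs among permutations of length 2k satisfies τ(2k) ≥ k − 1 + τ(k − 1). -/

import Mathlib

/-!
Put a permutation `σ` of length `m` on the `m` largest values, at the odd (0-based) positions of a
word of length `2m + 1`, and the decreasing run `m, …, 1, 0` at the even ones. Every pair of
consecutive values of the run is separated by the larger entry of `σ` lying between them, and `σ`
keeps its separated pairs, so `m + τ(m) ≤ τ(2m + 1)`. Larger lengths follow because appending new
maxima at the end of a word preserves its separated pairs.
-/

/-- `(v+1, v)` (0-based values) is a separated pair of `π`. -/
def IsSepPair {n : ℕ} (π : Equiv.Perm (Fin n)) (v : Fin n) : Prop :=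
  ∃ p q r : Fin n, p < q ∧ q < r ∧
    (π p : ℕ) = (v : ℕ) + 1 ∧ (v : ℕ) + 1 < (π q : ℕ) ∧ π r = v

/-- number of separated pairs of `π`. -/
noncomputable def sep {n : ℕ} (π : Equiv.Perm (Fin n)) : ℕ :=
  {v : Fin n | IsSepPair π v}.ncard

/-- `tau n` is the maximum of `sep` over all permutations of length `n`. -/
noncomputable def tau (n : ℕ) : ℕ :=
  Finset.univ.sup fun π : Equiv.Perm (Fin n) => sep π

open Equiv

theorem sep_le_tau {n : ℕ} (π : Perm (Fin n)) : sep π ≤ tau n :=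
  Finset.le_sup (f := fun π : Perm (Fin n) => sep π) (Finset.mem_univ π)

theorem exists_sep_eq_tau (n : ℕ) : ∃ π : Perm (Fin n), sep π = tau n := by
  obtain ⟨π, -, hπ⟩ := Finset.exists_mem_eq_sup Finset.univ Finset.univ_nonempty
    fun π : Perm (Fin n) => sep π
  exact ⟨π, hπ.symm⟩

theorem IsSepPair.map {n N c : ℕ} {π : Perm (Fin n)} {ρ : Perm (Fin N)} {f g : Fin n → Fin N}
    (hf : StrictMono f) (hg : ∀ v, (g v : ℕ) = c + v) (hρ : ∀ p, ρ (f p) = g (π p)) {v : Fin n}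
    (hv : IsSepPair π v) : IsSepPair ρ (g v) := by
  obtain ⟨p, q, r, hpq, hqr, hp, hq, hr⟩ := hv
  refine ⟨f p, f q, f r, hf hpq, hf hqr, ?_, ?_, by rw [hρ, hr]⟩
  · rw [hρ, hg, hg, hp, add_assoc]
  · rw [hρ, hg, hg]
    omega

theorem sep_le_sep_viaEmbedding_castLEEmb {n N : ℕ} (h : n ≤ N) (π : Perm (Fin n)) :
    sep π ≤ sep (π.viaEmbedding (Fin.castLEEmb h)) := by
  have hmaps : ∀ v, IsSepPair π v → IsSepPair (π.viaEmbedding (Fin.castLEEmb h)) (Fin.castLE h v) :=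
    fun v => IsSepPair.map (c := 0) (Fin.strictMono_castLE h) (fun v => (zero_add (v : ℕ)).symm)
      (π.viaEmbedding_apply (Fin.castLEEmb h))
  exact Set.ncard_le_ncard_of_injOn _ hmaps (Fin.castLE_injective h).injOn

theorem tau_mono : Monotone tau := fun _ _ h =>
  Finset.sup_le fun π _ => (sep_le_sep_viaEmbedding_castLEEmb h π).trans (sep_le_tau _)

/-- The splitting of the `2m + 1` positions of a word into the `m + 1` even ones and the `m` odd
ones. The length is written `m + 1 + m` to match the splitting of the values by
`finSumFinEquiv`. -/
noncomputable def evenOddEquiv (m : ℕ) : Fin (m + 1) ⊕ Fin m ≃ Fin (m + 1 + m) :=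
  Equiv.ofBijective
    (Sum.elim (fun i => ⟨2 * i, by omega⟩) fun j => ⟨2 * j + 1, by omega⟩) <| by
    rw [Fintype.bijective_iff_injective_and_card]
    refine ⟨Function.Injective.sumElim ?_ ?_ ?_, by simp⟩
    all_goals
      intro i j
      simp only [ne_eq, Fin.ext_iff]
      omega

theorem val_evenOddEquiv_inl {m : ℕ} (i : Fin (m + 1)) :
    (evenOddEquiv m (Sum.inl i) : ℕ) = 2 * i :=
  rfl

theorem val_evenOddEquiv_inr {m : ℕ} (j : Fin m) : (evenOddEquiv m (Sum.inr j) : ℕ) = 2 * j + 1 :=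
  rfl

/-- The permutation of length `2m + 1` that alternates the entries of `π`, in the even positions,
with those of `σ`, raised above all of `π`, in the odd positions. -/
noncomputable def interleave {m : ℕ} (π : Perm (Fin (m + 1))) (σ : Perm (Fin m)) :
    Perm (Fin (m + 1 + m)) :=
  (evenOddEquiv m).symm.trans ((Equiv.sumCongr π σ).trans finSumFinEquiv)

section Interleave

variable {m : ℕ} (π : Perm (Fin (m + 1))) (σ : Perm (Fin m))

theorem interleave_inl (i : Fin (m + 1)) :
    interleave π σ (evenOddEquiv m (Sum.inl i)) = Fin.castAdd m (π i) := by
  simp [interleave]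

theorem interleave_inr (j : Fin m) :
    interleave π σ (evenOddEquiv m (Sum.inr j)) = Fin.natAdd (m + 1) (σ j) := by
  simp [interleave]

variable {π} in
theorem isSepPair_interleave_castAdd {i : Fin m} (hi : π.symm i.succ < π.symm i.castSucc) :
    IsSepPair (interleave π σ) (Fin.castAdd m i.castSucc) := by
  let j : Fin m := (π.symm i.succ).castLT (by omega)
  refine ⟨evenOddEquiv m (Sum.inl (π.symm i.succ)), evenOddEquiv m (Sum.inr j),
    evenOddEquiv m (Sum.inl (π.symm i.castSucc)), ?_, ?_, ?_, ?_, ?_⟩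
  · rw [Fin.lt_def, val_evenOddEquiv_inl, val_evenOddEquiv_inr, Fin.val_castLT]
    omega
  · rw [Fin.lt_def, val_evenOddEquiv_inl, val_evenOddEquiv_inr, Fin.val_castLT]
    omega
  · rw [interleave_inl, apply_symm_apply, Fin.val_castAdd, Fin.val_castAdd, Fin.val_succ,
      Fin.val_castSucc]
  · rw [interleave_inr, Fin.val_natAdd, Fin.val_castAdd, Fin.val_castSucc]
    omega
  · rw [interleave_inl, apply_symm_apply]

variable {σ} in
theorem isSepPair_interleave_natAdd {v : Fin m} (hv : IsSepPair σ v) :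
    IsSepPair (interleave π σ) (Fin.natAdd (m + 1) v) := by
  have hodd : StrictMono fun j : Fin m => evenOddEquiv m (Sum.inr j) := fun i j hij => by
    rw [Fin.lt_def, val_evenOddEquiv_inr, val_evenOddEquiv_inr]
    omega
  exact hv.map hodd (Fin.val_natAdd (m + 1)) (interleave_inr π σ)

theorem ncard_add_sep_le_sep_interleave :
    {i : Fin m | π.symm i.succ < π.symm i.castSucc}.ncard + sep σ ≤ sep (interleave π σ) := by
  set D := {i : Fin m | π.symm i.succ < π.symm i.castSucc}
  let low : Fin m → Fin (m + 1 + m) := fun i => Fin.castAdd m i.castSucc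
  let high : Fin m → Fin (m + 1 + m) := Fin.natAdd (m + 1)
  have hlow : low.Injective := (Fin.castAdd_injective _ _).comp (Fin.castSucc_injective m)
  have hhigh : high.Injective := Fin.natAdd_injective m (m + 1)
  have hdisj : Disjoint (low '' D) (high '' {v | IsSepPair σ v}) := by
    rw [Set.disjoint_left]
    rintro _ ⟨i, -, rfl⟩ ⟨v, -, hv⟩
    simp only [low, high, Fin.ext_iff, Fin.val_natAdd, Fin.val_castAdd, Fin.val_castSucc] at hv
    omega
  have hsub : low '' D ∪ high '' {v | IsSepPair σ v} ⊆ {v | IsSepPair (interleave π σ) v} := by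
    rintro _ (⟨i, hi, rfl⟩ | ⟨v, hv, rfl⟩)
    · exact isSepPair_interleave_castAdd σ hi
    · exact isSepPair_interleave_natAdd π hv
  calc D.ncard + sep σ
      = (low '' D).ncard + (high '' {v | IsSepPair σ v}).ncard := by
        rw [Set.ncard_image_of_injective _ hlow, Set.ncard_image_of_injective _ hhigh, sep]
    _ = (low '' D ∪ high '' {v | IsSepPair σ v}).ncard := (Set.ncard_union_eq hdisj).symm
    _ ≤ sep (interleave π σ) := Set.ncard_le_ncard hsub

theorem add_sep_le_sep_interleave_revPerm : m + sep σ ≤ sep (interleave Fin.revPerm σ) := by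
  have hall : {i : Fin m | Fin.revPerm.symm i.succ < Fin.revPerm.symm i.castSucc} = Set.univ :=
    Set.eq_univ_of_forall fun i => Fin.rev_lt_rev.mpr i.castSucc_lt_succ
  simpa only [hall, Set.ncard_univ, Nat.card_fin] using
    ncard_add_sep_le_sep_interleave Fin.revPerm σ

end Interleave

theorem tau_even_ge_general {m n : ℕ} (h : 2 * m + 1 ≤ n) : m + tau m ≤ tau n := by
  obtain ⟨σ, hσ⟩ := exists_sep_eq_tau m
  calc m + tau m = m + sep σ := by rw [hσ]
    _ ≤ sep (interleave Fin.revPerm σ) := add_sep_le_sep_interleave_revPerm σ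
    _ ≤ tau (m + 1 + m) := sep_le_tau _
    _ ≤ tau n := tau_mono (by omega)

/-- For `k ≥ 2`, `τ(2k) ≥ k - 1 + τ(k - 1)`. -/
theorem tau_even_ge (k : ℕ) (hk : 2 ≤ k) : k - 1 + tau (k - 1) ≤ tau (2 * k) :=
  tau_even_ge_general (by omega)
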